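/- For every adversary stationary policy ν : S → P(B), the optimal counter-strategy value dominates the game value: max_{μ} v^{μ,ν} ≥ v* componentwise, where v* is the unique fixed point of T. -/

import Mathlib

/-!
Fix the adversary policy `ν`. What remains is a Markov decision process with compact action
space `A` and the continuous one-step lookahead `lookahead`, of which `Tpol` is the
`μ s`-average (`Tpol_eq_integral`). Its optimality operator `w ↦ max_a lookahead w s a` is a
`γ`-contraction of `S → ℝ`, so it has a fixed point `w`, and a maximiser of the lookahead of `w`
in each state gives a deterministic policy `μ0` with `T^{μ0,ν} w = w`, while `T^{μ,ν} w ≤ w` for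
every `μ`. The discrete maximum principle (`nonpos_of_le_mulVec`) turns sub- and supersolutions
of `T^{μ,ν}` into bounds on its fixed point `v^{μ,ν}`, whence `v^{μ,ν} ≤ w = v^{μ0,ν}`.

For the game value, bounding the infimum over adversaries by its value at `ν` yields
`v* ≤ max_a lookahead v* · a`, so `v* ≤ T^{μ1,ν} v*` for a policy `μ1` greedy with respect to
`v*`, and the same comparison gives `v* ≤ v^{μ1,ν} ≤ v^{μ0,ν}`.
-/

open MeasureTheory

/-- Expected one-step reward `r^{μ,ν}(s) = ∫_A ∫_B r(s,a,b) dν(s)(b) dμ(s)(a)`. -/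
noncomputable def rPol {S A B : Type*} [MeasurableSpace A] [MeasurableSpace B]
    (r : S → A → B → ℝ)
    (μ : S → ProbabilityMeasure A) (ν : S → ProbabilityMeasure B) (s : S) : ℝ :=
  ∫ a, ∫ b, r s a b ∂(ν s : Measure B) ∂(μ s : Measure A)

/-- Induced stochastic matrix `P^{μ,ν}(s,s') = ∫_A ∫_B P(s'|s,a,b) dν(s)(b) dμ(s)(a)`. -/
noncomputable def Pmat {S A B : Type*} [Fintype S] [MeasurableSpace A] [MeasurableSpace B]
    (P : S → S → A → B → ℝ)
    (μ : S → ProbabilityMeasure A) (ν : S → ProbabilityMeasure B) : Matrix S S ℝ :=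
  Matrix.of fun s s' => ∫ a, ∫ b, P s s' a b ∂(ν s : Measure B) ∂(μ s : Measure A)

/-- Fixed-policy Bellman operator `T^{μ,ν} v = r^{μ,ν} + γ P^{μ,ν} v`. -/
noncomputable def Tpol {S A B : Type*} [Fintype S] [MeasurableSpace A] [MeasurableSpace B]
    (γ : ℝ) (r : S → A → B → ℝ) (P : S → S → A → B → ℝ)
    (μ : S → ProbabilityMeasure A) (ν : S → ProbabilityMeasure B)
    (v : S → ℝ) : S → ℝ :=
  fun s => rPol r μ ν s + γ * (Pmat P μ ν).mulVec v s

/-- Value of the pair of stationary policies: `v^{μ,ν} = Σ_{t≥0} γ^t (P^{μ,ν})^t r^{μ,ν}`. -/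
noncomputable def vVal {S A B : Type*} [Fintype S] [DecidableEq S]
    [MeasurableSpace A] [MeasurableSpace B]
    (γ : ℝ) (r : S → A → B → ℝ) (P : S → S → A → B → ℝ)
    (μ : S → ProbabilityMeasure A) (ν : S → ProbabilityMeasure B) : S → ℝ :=
  ∑' t : ℕ, γ ^ t • ((Pmat P μ ν ^ t).mulVec (rPol r μ ν))

/-- Discrete maximum principle for a discounted stochastic matrix. -/
lemma nonpos_of_le_mulVec {S : Type*} [Fintype S] {γ : ℝ} (h0 : 0 ≤ γ) (h1 : γ < 1)
    {M : Matrix S S ℝ} (hM : ∀ s s', 0 ≤ M s s') (hM1 : ∀ s, ∑ s', M s s' = 1)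
    {x : S → ℝ} (hx : ∀ s, x s ≤ γ * M.mulVec x s) (s : S) : x s ≤ 0 := by
  have : Nonempty S := ⟨s⟩
  obtain ⟨m, hm⟩ := Finite.exists_max x
  have h : M.mulVec x m ≤ x m := by
    calc M.mulVec x m = ∑ s', M m s' * x s' := rfl
      _ ≤ ∑ s', M m s' * x m :=
          Finset.sum_le_sum fun s' _ => mul_le_mul_of_nonneg_left (hm s') (hM m s')
      _ = x m := by rw [← Finset.sum_mul, hM1, one_mul]
  have h2 := (hx m).trans (mul_le_mul_of_nonneg_left h h0)
  have := hm s
  nlinarith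

lemma norm_mulVec_le_of_stochastic {S : Type*} [Fintype S]
    {M : Matrix S S ℝ} (hM : ∀ s s', 0 ≤ M s s') (hM1 : ∀ s, ∑ s', M s s' = 1)
    (x : S → ℝ) : ‖M.mulVec x‖ ≤ ‖x‖ := by
  refine (pi_norm_le_iff_of_nonneg (norm_nonneg _)).2 fun s => ?_
  calc ‖M.mulVec x s‖ = ‖∑ s', M s s' * x s'‖ := rfl
    _ ≤ ∑ s', M s s' * ‖x‖ := by
        refine norm_sum_le_of_le _ fun s' _ => ?_
        rw [norm_mul, Real.norm_of_nonneg (hM s s')]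
        exact mul_le_mul_of_nonneg_left (norm_le_pi_norm x s') (hM s s')
    _ = ‖x‖ := by rw [← Finset.sum_mul, hM1, one_mul]

/-- The discounted Neumann series solves the Bellman equation. -/
lemma neumann_fixed {S : Type*} [Fintype S] [DecidableEq S] {γ : ℝ} (h0 : 0 ≤ γ) (h1 : γ < 1)
    {M : Matrix S S ℝ} (hM : ∀ s s', 0 ≤ M s s') (hM1 : ∀ s, ∑ s', M s s' = 1) (ρ : S → ℝ) :
    ∑' t : ℕ, γ ^ t • ((M ^ t).mulVec ρ)
      = ρ + γ • M.mulVec (∑' t : ℕ, γ ^ t • ((M ^ t).mulVec ρ)) := by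
  have hb : ∀ t : ℕ, ‖(M ^ t).mulVec ρ‖ ≤ ‖ρ‖ := by
    intro t
    induction t with
    | zero => simp
    | succ t ih =>
      rw [pow_succ', ← Matrix.mulVec_mulVec]
      exact (norm_mulVec_le_of_stochastic hM hM1 _).trans ih
  have hs : Summable fun t : ℕ => γ ^ t • ((M ^ t).mulVec ρ) := by
    refine Summable.of_norm_bounded
      ((summable_geometric_of_lt_one h0 h1).mul_right ‖ρ‖) fun t => ?_
    rw [norm_smul, Real.norm_of_nonneg (pow_nonneg h0 t)]
    exact mul_le_mul_of_nonneg_left (hb t) (pow_nonneg h0 t)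
  have hL := (γ • LinearMap.toContinuousLinearMap M.mulVecLin).map_tsum hs
  simp only [smul_apply, LinearMap.coe_toContinuousLinearMap',
    Matrix.mulVecLin_apply] at hL
  rw [hL, hs.tsum_eq_zero_add]
  simp only [pow_zero, Matrix.one_mulVec, one_smul]
  congr 2
  funext t
  rw [Matrix.mulVec_smul, Matrix.mulVec_mulVec, ← pow_succ', smul_smul, ← pow_succ']

/-- The expected return of action `a` in state `s` against `ν` when continuing with value `w`. -/
noncomputable def lookahead {S A B : Type*} [Fintype S] [MeasurableSpace B]
    (γ : ℝ) (r : S → A → B → ℝ) (P : S → S → A → B → ℝ)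
    (ν : S → ProbabilityMeasure B) (w : S → ℝ) (s : S) (a : A) : ℝ :=
  ∫ b, r s a b ∂(ν s : Measure B) + γ * ∑ s', (∫ b, P s s' a b ∂(ν s : Measure B)) * w s'

/-- The deterministic policy that plays `α s` in state `s`. -/
noncomputable def diracPolicy {S A : Type*} [MeasurableSpace A] (α : S → A) :
    S → ProbabilityMeasure A :=
  fun s => ⟨Measure.dirac (α s), inferInstance⟩

lemma continuous_integral_right {A B : Type*} [MetricSpace A] [CompactSpace A]
    [MetricSpace B] [CompactSpace B] [MeasurableSpace B] [BorelSpace B]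
    {f : A → B → ℝ} (hf : Continuous fun p : A × B => f p.1 p.2)
    (ν : ProbabilityMeasure B) : Continuous fun a => ∫ b, f a b ∂(ν : Measure B) := by
  have := continuous_parametric_integral_of_continuous (μ := (ν : Measure B)) (f := f) hf
    isCompact_univ
  simpa using this

lemma integrable_of_continuous {X : Type*} [MetricSpace X] [CompactSpace X] [MeasurableSpace X]
    [BorelSpace X] {f : X → ℝ} (hf : Continuous f) (μ : ProbabilityMeasure X) :
    Integrable f (μ : Measure X) :=
  hf.integrable_of_hasCompactSupport (HasCompactSupport.of_compactSpace f)

lemma Pmat_nonneg {S A B : Type*} [Fintype S] [MeasurableSpace A] [MeasurableSpace B]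
    {P : S → S → A → B → ℝ} (hP0 : ∀ s s' a b, 0 ≤ P s s' a b)
    (μ : S → ProbabilityMeasure A) (ν : S → ProbabilityMeasure B) (s s' : S) :
    0 ≤ Pmat P μ ν s s' :=
  integral_nonneg fun a => integral_nonneg fun b => hP0 s s' a b

section
variable {S A B : Type*} [Fintype S]
    [MetricSpace A] [CompactSpace A] [MeasurableSpace A] [BorelSpace A]
    [MetricSpace B] [CompactSpace B] [MeasurableSpace B] [BorelSpace B]
    {γ : ℝ} {r : S → A → B → ℝ} {P : S → S → A → B → ℝ}

lemma continuous_lookahead (hr : ∀ s, Continuous fun p : A × B => r s p.1 p.2)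
    (hPcont : ∀ s s', Continuous fun p : A × B => P s s' p.1 p.2)
    (ν : S → ProbabilityMeasure B) (w : S → ℝ) (s : S) :
    Continuous (lookahead γ r P ν w s) := by
  unfold lookahead
  exact (continuous_integral_right (hr s) _).add (continuous_const.mul
    (continuous_finsetSum _ fun s' _ =>
      (continuous_integral_right (hPcont s s') _).mul continuous_const))

lemma Tpol_eq_integral (hr : ∀ s, Continuous fun p : A × B => r s p.1 p.2)
    (hPcont : ∀ s s', Continuous fun p : A × B => P s s' p.1 p.2)
    (μ : S → ProbabilityMeasure A) (ν : S → ProbabilityMeasure B) (w : S → ℝ) (s : S) :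
    Tpol γ r P μ ν w s = ∫ a, lookahead γ r P ν w s a ∂(μ s : Measure A) := by
  have hi : ∀ s', Integrable (fun a => (∫ b, P s s' a b ∂(ν s : Measure B)) * w s')
      (μ s : Measure A) := fun s' =>
    (integrable_of_continuous (continuous_integral_right (hPcont s s') _) _).mul_const _
  unfold lookahead Tpol
  rw [integral_add (integrable_of_continuous (continuous_integral_right (hr s) _) _)
    ((integrable_finsetSum _ fun s' _ => hi s').const_mul γ), integral_const_mul,
    integral_finsetSum _ fun s' _ => hi s']
  simp only [integral_mul_const]
  rfl

lemma sum_integral_P (hPcont : ∀ s s', Continuous fun p : A × B => P s s' p.1 p.2)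
    (hPsum : ∀ s a b, ∑ s', P s s' a b = 1) (ν : S → ProbabilityMeasure B) (s : S) (a : A) :
    ∑ s', ∫ b, P s s' a b ∂(ν s : Measure B) = 1 := by
  have hi : ∀ s', Integrable (fun b => P s s' a b) (ν s : Measure B) := fun s' =>
    integrable_of_continuous ((hPcont s s').comp (Continuous.prodMk_right a)) (ν s)
  rw [← integral_finsetSum _ fun s' _ => hi s']
  simp [hPsum]

lemma sum_Pmat (hPcont : ∀ s s', Continuous fun p : A × B => P s s' p.1 p.2)
    (hPsum : ∀ s a b, ∑ s', P s s' a b = 1)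
    (μ : S → ProbabilityMeasure A) (ν : S → ProbabilityMeasure B) (s : S) :
    ∑ s', Pmat P μ ν s s' = 1 := by
  simp only [Pmat, Matrix.of_apply]
  rw [← integral_finsetSum _ fun s' _ => integrable_of_continuous
    (continuous_integral_right (hPcont s s') _) (μ s)]
  simp [sum_integral_P hPcont hPsum]

lemma vVal_fixed [DecidableEq S] (hγ : γ ∈ Set.Ioo (0 : ℝ) 1)
    (hPcont : ∀ s s', Continuous fun p : A × B => P s s' p.1 p.2)
    (hP0 : ∀ s s' a b, 0 ≤ P s s' a b) (hPsum : ∀ s a b, ∑ s', P s s' a b = 1)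
    (μ : S → ProbabilityMeasure A) (ν : S → ProbabilityMeasure B) (s : S) :
    vVal γ r P μ ν s = Tpol γ r P μ ν (vVal γ r P μ ν) s :=
  congrFun (neumann_fixed hγ.1.le hγ.2 (Pmat_nonneg hP0 μ ν) (sum_Pmat hPcont hPsum μ ν)
    (rPol r μ ν)) s

/-- Comparison principle: a subsolution of `T^{μ,ν}` lies below any supersolution. -/
lemma le_of_sub_super (hγ : γ ∈ Set.Ioo (0 : ℝ) 1)
    (hPcont : ∀ s s', Continuous fun p : A × B => P s s' p.1 p.2)
    (hP0 : ∀ s s' a b, 0 ≤ P s s' a b) (hPsum : ∀ s a b, ∑ s', P s s' a b = 1)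
    {μ : S → ProbabilityMeasure A} {ν : S → ProbabilityMeasure B} {x y : S → ℝ}
    (hx : ∀ s, x s ≤ Tpol γ r P μ ν x s) (hy : ∀ s, Tpol γ r P μ ν y s ≤ y s) (s : S) :
    x s ≤ y s := by
  have := nonpos_of_le_mulVec hγ.1.le hγ.2 (Pmat_nonneg hP0 μ ν) (sum_Pmat hPcont hPsum μ ν)
    (x := x - y) (fun s => by
      have h1 := hx s
      have h2 := hy s
      simp only [Tpol] at h1 h2
      rw [Matrix.mulVec_sub, Pi.sub_apply, Pi.sub_apply]
      linarith) s
  simpa using this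

lemma lookahead_le_add (h0 : 0 ≤ γ)
    (hPcont : ∀ s s', Continuous fun p : A × B => P s s' p.1 p.2)
    (hP0 : ∀ s s' a b, 0 ≤ P s s' a b) (hPsum : ∀ s a b, ∑ s', P s s' a b = 1)
    (ν : S → ProbabilityMeasure B) (w w' : S → ℝ) (s : S) (a : A) :
    lookahead γ r P ν w s a ≤ lookahead γ r P ν w' s a + γ * dist w w' := by
  have h : ∑ s', (∫ b, P s s' a b ∂(ν s : Measure B)) * w s'
      ≤ ∑ s', (∫ b, P s s' a b ∂(ν s : Measure B)) * w' s' + dist w w' := by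
    calc _ ≤ ∑ s', (∫ b, P s s' a b ∂(ν s : Measure B)) * (w' s' + dist w w') := by
          refine Finset.sum_le_sum fun s' _ => mul_le_mul_of_nonneg_left ?_
            (integral_nonneg fun b => hP0 s s' a b)
          have h1 := dist_le_pi_dist w w' s'
          have h2 := le_abs_self (w s' - w' s')
          rw [Real.dist_eq] at h1
          linarith
      _ = _ := by
          simp only [mul_add, Finset.sum_add_distrib]
          rw [← Finset.sum_mul, sum_integral_P hPcont hPsum, one_mul]
  have := mul_le_mul_of_nonneg_left h h0
  unfold lookahead
  linarith

/-- The optimality equation of the decision process against `ν` is solvable, with the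
maximum attained. -/
lemma exists_optimal [Nonempty A] (hγ : γ ∈ Set.Ioo (0 : ℝ) 1)
    (hr : ∀ s, Continuous fun p : A × B => r s p.1 p.2)
    (hPcont : ∀ s s', Continuous fun p : A × B => P s s' p.1 p.2)
    (hP0 : ∀ s s' a b, 0 ≤ P s s' a b) (hPsum : ∀ s a b, ∑ s', P s s' a b = 1)
    (ν : S → ProbabilityMeasure B) :
    ∃ (w : S → ℝ) (α : S → A), (∀ s, lookahead γ r P ν w s (α s) = w s) ∧
      ∀ s a, lookahead γ r P ν w s a ≤ w s := by
  have hmax : ∀ (w : S → ℝ) (s : S), ∃ a, ∀ a', lookahead γ r P ν w s a' ≤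
      lookahead γ r P ν w s a := fun w s => by
    obtain ⟨a, -, ha⟩ := isCompact_univ.exists_isMaxOn Set.univ_nonempty
      (continuous_lookahead (γ := γ) hr hPcont ν w s).continuousOn
    exact ⟨a, fun a' => ha (Set.mem_univ a')⟩
  choose g hg using hmax
  let U : (S → ℝ) → (S → ℝ) := fun w s => lookahead γ r P ν w s (g w s)
  have hle : ∀ w w' s, U w s ≤ U w' s + γ * dist w w' := fun w w' s =>
    (lookahead_le_add hγ.1.le hPcont hP0 hPsum ν w w' s (g w s)).trans (by
      have := hg w' s (g w s)
      simp only [U]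
      linarith)
  have hU : ContractingWith ⟨γ, hγ.1.le⟩ U := by
    refine ⟨hγ.2, LipschitzWith.of_dist_le_mul fun w w' => ?_⟩
    refine (dist_pi_le_iff (mul_nonneg hγ.1.le dist_nonneg)).2 fun s => ?_
    have h1 := hle w w' s
    have h2 := hle w' w s
    rw [dist_comm w' w] at h2
    rw [Real.dist_eq, abs_le]
    change -(γ * dist w w') ≤ _ ∧ _ ≤ γ * dist w w'
    constructor <;> linarith
  have hfp : U (ContractingWith.fixedPoint U hU) = ContractingWith.fixedPoint U hU :=
    hU.fixedPoint_isFixedPt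
  generalize ContractingWith.fixedPoint U hU = w at hfp
  exact ⟨w, g w, congrFun hfp, fun s a => (hg w s a).trans_eq (congrFun hfp s)⟩

/-- With the continuation value fixed, the one-step payoffs are bounded below uniformly in
the adversary's policy. -/
lemma bddBelow_Tpol (h0 : 0 ≤ γ) (hr : ∀ s, Continuous fun p : A × B => r s p.1 p.2)
    (hPcont : ∀ s s', Continuous fun p : A × B => P s s' p.1 p.2)
    (hP0 : ∀ s s' a b, 0 ≤ P s s' a b) (hPsum : ∀ s a b, ∑ s', P s s' a b = 1)
    (μ : S → ProbabilityMeasure A) (w : S → ℝ) (s : S) :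
    BddBelow (Set.range fun ν : S → ProbabilityMeasure B => Tpol γ r P μ ν w s) := by
  obtain ⟨C, hC⟩ := (isCompact_range (hr s)).bddBelow
  refine ⟨C - γ * ‖w‖, ?_⟩
  rintro _ ⟨ν, rfl⟩
  have h1 : C ≤ rPol r μ ν s := by
    have hb : ∀ a, C ≤ ∫ b, r s a b ∂(ν s : Measure B) := fun a => by
      have := integral_mono (μ := (ν s : Measure B)) (integrable_const C)
        (integrable_of_continuous ((hr s).comp (Continuous.prodMk_right a)) (ν s))
        (fun b => hC ⟨(a, b), rfl⟩)
      simpa using this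
    have := integral_mono (μ := (μ s : Measure A)) (integrable_const C)
      (integrable_of_continuous (continuous_integral_right (hr s) (ν s)) (μ s)) hb
    simpa [rPol] using this
  have h2 := (norm_le_pi_norm _ s).trans (norm_mulVec_le_of_stochastic
    (Pmat_nonneg hP0 μ ν) (sum_Pmat hPcont hPsum μ ν) w)
  have h3 := mul_le_mul_of_nonneg_left (abs_le.1 h2).1 h0
  simp only [Tpol]
  linarith

end

theorem stmt8 {S A B : Type*} [Fintype S] [DecidableEq S]
    [MetricSpace A] [CompactSpace A] [Nonempty A] [MeasurableSpace A] [BorelSpace A]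
    [MetricSpace B] [CompactSpace B] [Nonempty B] [MeasurableSpace B] [BorelSpace B]
    (γ : ℝ) (hγ : γ ∈ Set.Ioo (0:ℝ) 1)
    (r : S → A → B → ℝ) (hr : ∀ s, Continuous fun p : A × B => r s p.1 p.2)
    (P : S → S → A → B → ℝ)
    (hPcont : ∀ s s', Continuous fun p : A × B => P s s' p.1 p.2)
    (hP0 : ∀ s s' a b, 0 ≤ P s s' a b) (hP1 : ∀ s s' a b, P s s' a b ≤ 1)
    (hPsum : ∀ s a b, ∑ s', P s s' a b = 1)
    (vstar : S → ℝ)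
    (hfix : ∀ s : S, (⨆ μ : S → ProbabilityMeasure A, ⨅ ν : S → ProbabilityMeasure B,
        Tpol γ r P μ ν vstar s) = vstar s)
    (huniq : ∀ w : S → ℝ,
        (∀ s : S, (⨆ μ : S → ProbabilityMeasure A, ⨅ ν : S → ProbabilityMeasure B,
            Tpol γ r P μ ν w s) = w s) → w = vstar) :
    ∀ ν : S → ProbabilityMeasure B, ∃ μ0 : S → ProbabilityMeasure A,
      (∀ (μ : S → ProbabilityMeasure A) (s : S), vVal γ r P μ ν s ≤ vVal γ r P μ0 ν s)
      ∧ (∀ s : S, vstar s ≤ vVal γ r P μ0 ν s) := by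
  intro ν
  obtain ⟨w, α, hα, hw⟩ := exists_optimal hγ hr hPcont hP0 hPsum ν
  have hdirac : ∀ (β : S → A) (x : S → ℝ) (s : S),
      Tpol γ r P (diracPolicy β) ν x s
        = lookahead γ r P ν x s (β s) := fun β x s => by
    rw [Tpol_eq_integral hr hPcont]
    exact integral_dirac _ _
  have hTle : ∀ (μ : S → ProbabilityMeasure A) (x : S → ℝ) (s : S) (c : ℝ),
      (∀ a, lookahead γ r P ν x s a ≤ c) → Tpol γ r P μ ν x s ≤ c := fun μ x s c hc => by
    rw [Tpol_eq_integral hr hPcont]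
    have := integral_mono (μ := (μ s : Measure A))
      (integrable_of_continuous (continuous_lookahead hr hPcont ν x s) (μ s))
      (integrable_const c) hc
    simpa using this
  have hfp := fun μ => vVal_fixed (r := r) hγ hPcont hP0 hPsum μ ν
  have hvw : ∀ (μ : S → ProbabilityMeasure A) (s : S), vVal γ r P μ ν s ≤ w s := fun μ =>
    le_of_sub_super hγ hPcont hP0 hPsum (fun s => (hfp μ s).le)
      fun s => hTle μ w s _ (hw s)
  have hwv : ∀ s, w s ≤ vVal γ r P (diracPolicy α) ν s :=
    le_of_sub_super hγ hPcont hP0 hPsum (fun s => ((hdirac α w s).trans (hα s)).ge)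
      fun s => (hfp _ s).ge
  refine ⟨_, fun μ s => (hvw μ s).trans (hwv s), fun s => le_trans ?_ (hwv s)⟩
  have hgreedy : ∀ s, ∃ a, ∀ a', lookahead γ r P ν vstar s a' ≤
      lookahead γ r P ν vstar s a := fun s => by
    obtain ⟨a, -, ha⟩ := isCompact_univ.exists_isMaxOn Set.univ_nonempty
      (continuous_lookahead (γ := γ) hr hPcont ν vstar s).continuousOn
    exact ⟨a, fun a' => ha (Set.mem_univ a')⟩
  choose β hβ using hgreedy
  have : Nonempty (S → ProbabilityMeasure A) :=
    ⟨diracPolicy α⟩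
  have hstar : ∀ s, vstar s ≤ lookahead γ r P ν vstar s (β s) := fun s => by
    rw [← hfix s]
    exact ciSup_le fun μ => (ciInf_le
      (bddBelow_Tpol hγ.1.le hr hPcont hP0 hPsum μ vstar s) ν).trans
      (hTle μ vstar s _ (hβ s))
  exact (le_of_sub_super hγ hPcont hP0 hPsum
    (fun s => (hstar s).trans_eq (hdirac β vstar s).symm) (fun s => (hfp _ s).ge) s).trans
    (hvw _ s)
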